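/- Let d ≥ 2, p ∈ [1,∞), s ∈ (1/p, 1), and μ₀ > 0. Then there exists a constant C > 0, depending only on d, p, s and μ₀, such that for every d-dimensional simplex T ⊆ ℝ^d with shape measure μ(T) ≤ μ₀, every facet F of T, and every continuous function v : T → ℝ with ∫_T v dx = 0 and finite Gagliardo seminorm |v|_{W^{s,p}(T)}, one has ( ∫_F |v|^p dH^{d−1} )^{1/p} ≤ C · h_T^{s − 1/p} · |v|_{W^{s,p}(T)}, where H^{d−1} is the (d−1)-dimensional Hausdorff measure and h_T the diameter of T. -/

import Mathlib

/-!
The proof is a chaining argument centred at the points `z` of the trace set `F ⊆ T`. By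
convexity the homothetic copies `T_n(z) = z + 2 ^ (-n) (T - z)` lie in `T`; the mean of `v` over
`T_n(z)` is the mean over `T` for `n = 0` and tends to `v(z)` as `n → ∞`. By Jensen's inequality
the `p`-th power of the difference of two consecutive means is at most the mean of
`|v(x) - v(y)| ^ p` over `T_n(z) × T_{n+1}(z)`, where `‖x - y‖` is at most a multiple of
`2 ^ (-n) h_T`, so that the Gagliardo kernel can be inserted. On integrating over `z` and
exchanging integrals, the trace measure enters only through the mass it gives to balls of radius
`2 ^ (-n) h_T`, which for the Hausdorff measure of a piece of an affine subspace of codimension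
`m` is at most a multiple of `(2 ^ (-n) h_T) ^ (d - m)`. The `n`-th step then costs
`(2 ^ (-n) h_T) ^ (s - m / p)` times the seminorm in `L^p(F)`, and these terms form a convergent
geometric series because `s > m / p`. No reference simplex is used, and the shape of `T` enters
only through the ratio `h_T ^ d / vol(T)`.
-/

open MeasureTheory

/-- The Sobolev–Slobodeckij (Gagliardo) seminorm
`( ∫_T ∫_T |v(x) − v(y)|^p / ‖x − y‖^{d + s p} dx dy )^{1/p}` of a function on a
subset `T` of Euclidean `d`-space. -/
noncomputable def gagliardoSeminorm (d : ℕ) (s p : ℝ)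
    (T : Set (EuclideanSpace ℝ (Fin d))) (v : EuclideanSpace ℝ (Fin d) → ℝ) : ℝ :=
  (∫ x in T, ∫ y in T, |v x - v y| ^ p / ‖x - y‖ ^ ((d : ℝ) + s * p)) ^ (1 / p)

section

open Metric Set Filter Module
open scoped ENNReal NNReal Topology BoundedContinuousFunction

section Jensen

variable {α β G : Type*} [MeasurableSpace α] [MeasurableSpace β]
  [NormedAddCommGroup G] {p : ℝ}

theorem ofReal_integral_norm_rpow_le_eLpNorm {ν : Measure α} {f : α → G} (hp : 0 < p) :
    ENNReal.ofReal ((∫ a, ‖f a‖ ^ p ∂ν) ^ (1 / p)) ≤ eLpNorm f (ENNReal.ofReal p) ν := by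
  have h_nonneg : 0 ≤ ∫ a, ‖f a‖ ^ p ∂ν := integral_nonneg fun a => by positivity
  rw [eLpNorm_eq_lintegral_rpow_enorm_toReal (by simpa using hp) ENNReal.ofReal_ne_top,
    ENNReal.toReal_ofReal hp.le, ← ENNReal.ofReal_rpow_of_nonneg h_nonneg (by positivity),
    ← Real.enorm_of_nonneg h_nonneg]
  gcongr
  simpa only [Real.enorm_rpow_of_nonneg (norm_nonneg _) hp.le, enorm_norm] using
    enorm_integral_le_lintegral_enorm (μ := ν) fun a => ‖f a‖ ^ p

variable [NormedSpace ℝ G]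

theorem enorm_integral_rpow_le_lintegral {ν : Measure α} [IsProbabilityMeasure ν] {f : α → G}
    (hf : AEStronglyMeasurable f ν) (hp : 1 ≤ p) :
    ‖∫ a, f a ∂ν‖ₑ ^ p ≤ ∫⁻ a, ‖f a‖ₑ ^ p ∂ν := by
  have hp₀ : 0 < p := by linarith
  have h_mono : ∫⁻ a, ‖f a‖ₑ ∂ν ≤ (∫⁻ a, ‖f a‖ₑ ^ p ∂ν) ^ (1 / p) := by
    have h := eLpNorm_le_eLpNorm_of_exponent_le (ENNReal.one_le_ofReal.2 hp) hf
    rwa [eLpNorm_one_eq_lintegral_enorm, eLpNorm_eq_lintegral_rpow_enorm_toReal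
      (by simpa using hp₀) ENNReal.ofReal_ne_top, ENNReal.toReal_ofReal hp₀.le] at h
  rw [one_div, ENNReal.le_rpow_inv_iff hp₀] at h_mono
  exact (ENNReal.rpow_le_rpow (enorm_integral_le_lintegral_enorm f) hp₀.le).trans h_mono

theorem enorm_average_sub_average_rpow_le [CompleteSpace G] {ν : Measure α} {ξ : Measure β}
    [IsFiniteMeasure ν] [NeZero ν] [IsFiniteMeasure ξ] [NeZero ξ] {f : α → G} {g : β → G}
    (hf : Integrable f ν) (hg : Integrable g ξ) (hp : 1 ≤ p) :
    ‖⨍ a, f a ∂ν - ⨍ b, g b ∂ξ‖ₑ ^ p ≤ ⨍⁻ a, ⨍⁻ b, ‖f a - g b‖ₑ ^ p ∂ξ ∂ν := by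
  have hf' := hf.to_average
  have hg' := hg.to_average
  rw [laverage]
  calc ‖⨍ a, f a ∂ν - ⨍ b, g b ∂ξ‖ₑ ^ p
      = ‖⨍ a, (f a - ⨍ b, g b ∂ξ) ∂ν‖ₑ ^ p := by
        simp only [average, integral_sub hf' (integrable_const _), integral_const, probReal_univ,
          one_smul]
    _ ≤ ⨍⁻ a, ‖f a - ⨍ b, g b ∂ξ‖ₑ ^ p ∂ν :=
        enorm_integral_rpow_le_lintegral
          (hf'.sub (integrable_const _)).aestronglyMeasurable hp
    _ ≤ ⨍⁻ a, ⨍⁻ b, ‖f a - g b‖ₑ ^ p ∂ξ ∂ν := by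
        refine lintegral_mono fun a => ?_
        have h_const : f a - ⨍ b, g b ∂ξ = ⨍ b, (f a - g b) ∂ξ := by
          simp only [average, integral_sub (integrable_const _) hg', integral_const, probReal_univ,
            one_smul]
        rw [h_const]
        exact enorm_integral_rpow_le_lintegral
          ((integrable_const _).sub hg').aestronglyMeasurable hp

end Jensen

section Homothety

variable {E : Type*} [NormedAddCommGroup E] [NormedSpace ℝ E] [MeasurableSpace E] (μ : Measure E)
  {T : Set E}

/-- The shape measure `h_T ^ D / μ(T)` of a subset `T` of a `D`-dimensional space. -/
noncomputable def shapeMeasure (T : Set E) : ℝ :=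
  diam T ^ finrank ℝ E / μ.real T

theorem shapeMeasure_nonneg : 0 ≤ shapeMeasure μ T := by
  unfold shapeMeasure
  positivity

variable [FiniteDimensional ℝ E] [BorelSpace E] [μ.IsAddHaarMeasure]

theorem measurableEmbedding_homothety (z : E) {c : ℝ} (hc : c ≠ 0) :
    MeasurableEmbedding (AffineMap.homothety z c : E → E) :=
  (AffineMap.homothety_continuous z c).measurableEmbedding
    (AffineEquiv.homothetyUnitsMulHom z (Units.mk0 c hc)).injective

theorem map_homothety_addHaar (z : E) {c : ℝ} (hc : c ≠ 0) :
    μ.map (AffineMap.homothety z c) = ENNReal.ofReal |(c ^ finrank ℝ E)⁻¹| • μ := by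
  refine Measure.ext fun A _ => ?_
  have h_surj : Function.Surjective (AffineMap.homothety z c : E → E) :=
    (AffineEquiv.homothetyUnitsMulHom z (Units.mk0 c hc)).surjective
  have h_image := Measure.addHaar_image_homothety μ z c (AffineMap.homothety z c ⁻¹' A)
  rw [image_preimage_eq _ h_surj] at h_image
  rw [(measurableEmbedding_homothety z hc).map_apply, Measure.smul_apply, smul_eq_mul, h_image,
    ← mul_assoc, ← ENNReal.ofReal_mul (abs_nonneg _), ← abs_mul,
    inv_mul_cancel₀ (pow_ne_zero _ hc), abs_one, ENNReal.ofReal_one, one_mul]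

theorem setLIntegral_comp_homothety (z : E) {c : ℝ} (hc : c ≠ 0) (T : Set E) (f : E → ℝ≥0∞) :
    ∫⁻ y in T, f (AffineMap.homothety z c y) ∂μ =
      ENNReal.ofReal |(c ^ finrank ℝ E)⁻¹| * ∫⁻ x in AffineMap.homothety z c '' T, f x ∂μ := by
  have h_emb := measurableEmbedding_homothety z hc
  rw [← h_emb.lintegral_map, ← preimage_image_eq T h_emb.injective, ← h_emb.restrict_map,
    map_homothety_addHaar μ z hc, preimage_image_eq T h_emb.injective, Measure.restrict_smul,
    lintegral_smul_measure, smul_eq_mul]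

theorem image_homothety_subset_inter_closedBall {F : Type*} [NormedAddCommGroup F] [NormedSpace ℝ F]
    {T : Set F} (hT : Convex ℝ T) (hTb : Bornology.IsBounded T) {z : F} (hz : z ∈ T)
    {c : ℝ} (hc : 0 ≤ c) (hc₁ : c ≤ 1) :
    AffineMap.homothety z c '' T ⊆ closedBall z (c * diam T) ∩ T := by
  rintro _ ⟨y, hy, rfl⟩
  refine ⟨?_, ?_⟩
  · rw [mem_closedBall, dist_homothety_center, Real.norm_of_nonneg hc]
    gcongr
    exact dist_le_diam_of_mem hTb hz hy
  · rw [AffineMap.homothety_eq_lineMap]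
    exact hT.lineMap_mem hz hy ⟨hc, hc₁⟩

theorem diam_pos_of_addHaar_ne_zero [Nontrivial E] (hTb : Bornology.IsBounded T) (hμT : μ T ≠ 0) :
    0 < diam T :=
  diam_pos (not_subsingleton_iff.1 fun h => hμT (h.measure_zero μ)) hTb

theorem setLAverage_comp_homothety_le [Nontrivial E] (hT : Convex ℝ T)
    (hTb : Bornology.IsBounded T) (hμT : μ T ≠ 0) {z : E} (hz : z ∈ T) {c : ℝ} (hc : 0 < c)
    (hc₁ : c ≤ 1) (f : E → ℝ≥0∞) :
    ⨍⁻ y in T, f (AffineMap.homothety z c y) ∂μ ≤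
      ENNReal.ofReal (shapeMeasure μ T / (c * diam T) ^ finrank ℝ E) *
        ∫⁻ x in closedBall z (c * diam T), f x ∂(μ.restrict T) := by
  have h_diam := diam_pos_of_addHaar_ne_zero μ hTb hμT
  have hμT_pos : 0 < μ.real T := ENNReal.toReal_pos hμT hTb.measure_lt_top.ne
  have h_const : |(c ^ finrank ℝ E)⁻¹| / μ.real T =
      shapeMeasure μ T / (c * diam T) ^ finrank ℝ E := by
    rw [abs_of_pos (by positivity), shapeMeasure, mul_pow]
    field_simp
  rw [← h_const, ENNReal.ofReal_div_of_pos hμT_pos, ofReal_measureReal hTb.measure_lt_top.ne,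
    setLAverage_eq, setLIntegral_comp_homothety μ z hc.ne', ENNReal.mul_div_right_comm,
    Measure.restrict_restrict measurableSet_closedBall]
  gcongr
  exact image_homothety_subset_inter_closedBall hT hTb hz hc.le hc₁

end Homothety

section Gagliardo

variable {E G : Type*} [NormedAddCommGroup E] [NormedSpace ℝ E] [NormedAddCommGroup G]
  {s p : ℝ} {V : E → G}

/-- The integrand of the `p`-th power of the Gagliardo seminorm `|V|_{W^{s,p}}`, as a function with
values in `ℝ≥0∞`; for `p > 0` it vanishes on the diagonal, as `0 / 0 = 0`. -/
noncomputable def gagliardoKernel (s p : ℝ) (V : E → G) (x y : E) : ℝ≥0∞ :=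
  ‖V x - V y‖ₑ ^ p / ‖x - y‖ₑ ^ (finrank ℝ E + s * p)

/-- The `p`-th power of the Gagliardo seminorm `|V|_{W^{s,p}(T)}`, with values in `ℝ≥0∞`. -/
noncomputable def gagliardoEnergy [MeasurableSpace E] (μ : Measure E) (s p : ℝ) (T : Set E)
    (V : E → G) : ℝ≥0∞ :=
  ∫⁻ x in T, ∫⁻ y in T, gagliardoKernel s p V x y ∂μ ∂μ

theorem measurable_gagliardoKernel [MeasurableSpace E] [BorelSpace E] [SecondCountableTopology E]
    [MeasurableSpace G] [BorelSpace G] (hV : StronglyMeasurable V) :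
    Measurable (Function.uncurry (gagliardoKernel s p V)) := by
  have h_num : Measurable fun q : E × E => ‖V q.1 - V q.2‖ₑ :=
    ((hV.comp_measurable measurable_fst).sub (hV.comp_measurable measurable_snd)).enorm
  exact (h_num.pow_const p).div
    ((measurable_fst.sub measurable_snd).enorm.pow_const (finrank ℝ E + s * p))

theorem enorm_sub_rpow_le_mul_gagliardoKernel (hp : 0 < p) (hs : 0 ≤ s) {x y : E} {r : ℝ}
    (hxy : ‖x - y‖ ≤ r) :
    ‖V x - V y‖ₑ ^ p ≤ ENNReal.ofReal (r ^ (finrank ℝ E + s * p)) * gagliardoKernel s p V x y := by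
  rcases eq_or_ne x y with rfl | hne
  · simp [hp]
  have h_exp : 0 ≤ finrank ℝ E + s * p := by positivity
  have h_pos : ‖x - y‖ₑ ≠ 0 := by simpa [sub_eq_zero] using hne
  calc ‖V x - V y‖ₑ ^ p
      = ‖x - y‖ₑ ^ (finrank ℝ E + s * p) * gagliardoKernel s p V x y :=
        (ENNReal.mul_div_cancel (by simp [h_pos]) (by simp [h_exp])).symm
    _ ≤ ENNReal.ofReal (r ^ (finrank ℝ E + s * p)) * gagliardoKernel s p V x y := by
        rw [← ENNReal.ofReal_rpow_of_nonneg ((norm_nonneg _).trans hxy) h_exp, ← ofReal_norm]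
        gcongr

theorem gagliardoKernel_eq_ofReal (hp : 0 < p) (hs : 0 ≤ s) (x y : E) :
    gagliardoKernel s p V x y =
      ENNReal.ofReal (‖V x - V y‖ ^ p / ‖x - y‖ ^ (finrank ℝ E + s * p)) := by
  rcases eq_or_ne x y with rfl | hne
  · simp [gagliardoKernel, hp, hp.ne']
  · have h_pos : 0 < ‖x - y‖ := norm_pos_iff.2 (sub_ne_zero.2 hne)
    rw [gagliardoKernel, ENNReal.ofReal_div_of_pos (by positivity),
      ← ENNReal.ofReal_rpow_of_nonneg (norm_nonneg _) hp.le,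
      ← ENNReal.ofReal_rpow_of_nonneg (norm_nonneg _) (by positivity), ofReal_norm, ofReal_norm]

theorem gagliardoEnergy_congr [MeasurableSpace E] {μ : Measure E} {T : Set E}
    (hT : MeasurableSet T) {W : E → G} (hVW : EqOn V W T) :
    gagliardoEnergy μ s p T V = gagliardoEnergy μ s p T W :=
  setLIntegral_congr_fun hT fun x hx => setLIntegral_congr_fun hT fun y hy => by
    simp only [gagliardoKernel, hVW hx, hVW hy]

theorem setLAverage_enorm_sub_homothety_rpow_le [MeasurableSpace E] [BorelSpace E]
    [FiniteDimensional ℝ E] [Nontrivial E] {μ : Measure E} [μ.IsAddHaarMeasure] {T : Set E}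
    (hT : Convex ℝ T) (hTb : Bornology.IsBounded T) (hμT : μ T ≠ 0) (hp : 0 < p) (hs : 0 ≤ s)
    {x z : E} (hz : z ∈ T) {c R : ℝ} (hc : 0 < c) (hc₁ : c ≤ 1) (hx : dist x z ≤ R) (V : E → G) :
    ⨍⁻ y in T, ‖V x - V (AffineMap.homothety z c y)‖ₑ ^ p ∂μ ≤
      ENNReal.ofReal (shapeMeasure μ T / (c * diam T) ^ finrank ℝ E *
        (R + c * diam T) ^ (finrank ℝ E + s * p)) * ∫⁻ y in T, gagliardoKernel s p V x y ∂μ := by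
  have h_diam := diam_pos_of_addHaar_ne_zero μ hTb hμT
  have h_shape : 0 ≤ shapeMeasure μ T := shapeMeasure_nonneg μ
  have h_pair {y : E} (hy : y ∈ closedBall z (c * diam T)) : ‖x - y‖ ≤ R + c * diam T := by
    rw [← dist_eq_norm]
    linarith [dist_triangle_right x y z, mem_closedBall.1 hy]
  rw [ENNReal.ofReal_mul (by positivity), mul_assoc]
  refine (setLAverage_comp_homothety_le μ hT hTb hμT hz hc hc₁ fun y => ‖V x - V y‖ₑ ^ p).trans ?_
  gcongr
  calc ∫⁻ y in closedBall z (c * diam T), ‖V x - V y‖ₑ ^ p ∂(μ.restrict T)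
      ≤ ∫⁻ y in closedBall z (c * diam T),
          ENNReal.ofReal ((R + c * diam T) ^ (finrank ℝ E + s * p)) *
            gagliardoKernel s p V x y ∂(μ.restrict T) :=
        setLIntegral_mono' measurableSet_closedBall fun y hy =>
          enorm_sub_rpow_le_mul_gagliardoKernel hp hs (h_pair hy)
    _ = ENNReal.ofReal ((R + c * diam T) ^ (finrank ℝ E + s * p)) *
          ∫⁻ y in closedBall z (c * diam T), gagliardoKernel s p V x y ∂(μ.restrict T) :=
        lintegral_const_mul' _ _ ENNReal.ofReal_ne_top
    _ ≤ ENNReal.ofReal ((R + c * diam T) ^ (finrank ℝ E + s * p)) *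
          ∫⁻ y in T, gagliardoKernel s p V x y ∂μ :=
        mul_le_mul_right (setLIntegral_le_lintegral _ _) _

end Gagliardo

section UpperRegular

variable {X : Type*} [PseudoMetricSpace X] [MeasurableSpace X]

/-- `κ` is upper Ahlfors regular of exponent `t` with constant `A`. -/
def IsUpperAhlforsRegular (κ : Measure X) (t A : ℝ) : Prop :=
  ∀ x r, 0 < r → κ (closedBall x r) ≤ ENNReal.ofReal (A * r ^ t)

theorem IsUpperAhlforsRegular.isLocallyFiniteMeasure {κ : Measure X} {t A : ℝ}
    (hκ : IsUpperAhlforsRegular κ t A) : IsLocallyFiniteMeasure κ :=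
  ⟨fun x => ⟨closedBall x 1, closedBall_mem_nhds x one_pos,
    (hκ x 1 one_pos).trans_lt ENNReal.ofReal_lt_top⟩⟩

variable [OpensMeasurableSpace X] [SecondCountableTopology X]

theorem lintegral_setLIntegral_closedBall_le {κ ν : Measure X} [SFinite κ] [SFinite ν] {r : ℝ}
    {B : ℝ≥0∞} (hκ : ∀ x, κ (closedBall x r) ≤ B) {J : X → ℝ≥0∞} (hJ : Measurable J) :
    ∫⁻ z, ∫⁻ x in closedBall z r, J x ∂ν ∂κ ≤ B * ∫⁻ x, J x ∂ν := by
  have h_meas : MeasurableSet {q : X × X | dist q.2 q.1 ≤ r} :=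
    (isClosed_le (by fun_prop) continuous_const).measurableSet
  calc ∫⁻ z, ∫⁻ x in closedBall z r, J x ∂ν ∂κ
      = ∫⁻ z, ∫⁻ x, {q : X × X | dist q.2 q.1 ≤ r}.indicator (fun q => J q.2) (z, x) ∂ν ∂κ :=
        lintegral_congr fun z => (lintegral_indicator measurableSet_closedBall J).symm
    _ = ∫⁻ x, ∫⁻ z, {q : X × X | dist q.2 q.1 ≤ r}.indicator (fun q => J q.2) (z, x) ∂κ ∂ν :=
        lintegral_lintegral_swap ((hJ.comp measurable_snd).indicator h_meas).aemeasurable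
    _ = ∫⁻ x, J x * κ (closedBall x r) ∂ν := by
        refine lintegral_congr fun x => ?_
        rw [← lintegral_indicator_const measurableSet_closedBall]
        simp only [indicator, mem_ofPred_eq, mem_closedBall, dist_comm]
    _ ≤ ∫⁻ x, B * J x ∂ν := by
        refine lintegral_mono fun x => ?_
        rw [mul_comm]
        gcongr
        exact hκ x
    _ = B * ∫⁻ x, J x ∂ν := lintegral_const_mul _ hJ

end UpperRegular

section Chaining

variable {α G : Type*} [MeasurableSpace α] [NormedAddCommGroup G] {κ : Measure α}

theorem eLpNorm_sub_le_of_geometric {p K θ : ℝ≥0∞} (hp : 1 ≤ p) {g : ℕ → α → G}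
    {V : α → G} (hg : ∀ n, AEStronglyMeasurable (g n) κ)
    (h_step : ∀ n, eLpNorm (g (n + 1) - g n) p κ ≤ K * θ ^ n)
    (h_lim : ∀ᵐ z ∂κ, Tendsto (fun n => g n z) atTop (𝓝 (V z))) :
    eLpNorm (V - g 0) p κ ≤ K * (1 - θ)⁻¹ := by
  have h_partial (N : ℕ) : eLpNorm (g N - g 0) p κ ≤ K * (1 - θ)⁻¹ :=
    calc eLpNorm (g N - g 0) p κ
        = eLpNorm (∑ n ∈ Finset.range N, (g (n + 1) - g n)) p κ := by rw [Finset.sum_range_sub]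
      _ ≤ ∑ n ∈ Finset.range N, eLpNorm (g (n + 1) - g n) p κ :=
          eLpNorm_sum_le (fun n _ => (hg (n + 1)).sub (hg n)) hp
      _ ≤ ∑ n ∈ Finset.range N, K * θ ^ n := Finset.sum_le_sum fun n _ => h_step n
      _ ≤ ∑' n, K * θ ^ n := ENNReal.sum_le_tsum _
      _ = K * (1 - θ)⁻¹ := by rw [ENNReal.tsum_mul_left, ENNReal.tsum_geometric]
  have h_lim' : ∀ᵐ z ∂κ, Tendsto (fun n => (g n - g 0) z) atTop (𝓝 ((V - g 0) z)) :=
    h_lim.mono fun z hz => hz.sub_const (g 0 z)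
  exact (Lp.eLpNorm_lim_le_liminf_eLpNorm (fun n => (hg n).sub (hg 0)) _ h_lim').trans
    (liminf_le_of_le (by isBoundedDefault) fun b hb =>
      let ⟨N, hN⟩ := hb.exists; hN.trans (h_partial N))

end Chaining

theorem exists_boundedContinuousFunction_eqOn {X : Type*} [TopologicalSpace X] [T2Space X]
    [NormalSpace X] {T : Set X} (hT : IsCompact T) {v : X → ℝ} (hv : ContinuousOn v T) :
    ∃ V : X →ᵇ ℝ, EqOn V v T := by
  have := isCompact_iff_compactSpace.1 hT
  obtain ⟨V, -, hV⟩ := BoundedContinuousFunction.exists_norm_eq_domRestrict_eq_of_closed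
    (BoundedContinuousFunction.mkOfCompact ⟨T.domRestrict v, hv.domRestrict⟩) hT.isClosed
  exact ⟨V, fun x hx => DFunLike.congr_fun hV ⟨x, hx⟩⟩

section Means

variable {E G : Type*} [NormedAddCommGroup E] [NormedSpace ℝ E] [MeasurableSpace E]
  [NormedAddCommGroup G] {μ : Measure E} {T : Set E} {c s p : ℝ} {z : E}

theorem integrable_comp_homothety [SecondCountableTopology E] [BorelSpace E]
    [IsFiniteMeasure (μ.restrict T)] (V : E →ᵇ G) (z : E) (c : ℝ) :
    Integrable (fun y => V (AffineMap.homothety z c y)) (μ.restrict T) :=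
  .of_bound (V.continuous.comp (AffineMap.homothety_continuous z c)).aestronglyMeasurable ‖V‖
    (.of_forall fun _ => V.norm_coe_le_norm _)

variable [NormedSpace ℝ G]

/-- The mean of `V` over the homothetic copy `z + c (T - z)` of `T`, written as a mean over `T`
itself so that it is meaningful for `c = 0` too. -/
noncomputable def homothetyMean (μ : Measure E) (T : Set E) (V : E → G) (c : ℝ) (z : E) : G :=
  ⨍ y in T, V (AffineMap.homothety z c y) ∂μ

theorem homothetyMean_one (V : E → G) : homothetyMean μ T V 1 z = ⨍ y in T, V y ∂μ := by
  simp only [homothetyMean, AffineMap.homothety_one, AffineMap.id_apply]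

theorem stronglyMeasurable_homothetyMean [SecondCountableTopology E] [BorelSpace E] [SFinite μ]
    {V : E → G} (hV : Continuous V) (c : ℝ) : StronglyMeasurable (homothetyMean μ T V c) := by
  have h_cont : Continuous fun q : E × E => AffineMap.homothety q.1 c q.2 := by
    simp only [AffineMap.homothety_apply, vsub_eq_sub, vadd_eq_add]
    fun_prop
  exact StronglyMeasurable.integral_prod_right (f := fun z y => V (AffineMap.homothety z c y))
    (hV.comp h_cont).stronglyMeasurable

theorem tendsto_homothetyMean_zero [SecondCountableTopology E] [BorelSpace E] [CompleteSpace G]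
    [IsFiniteMeasure (μ.restrict T)] [NeZero (μ.restrict T)] (V : E →ᵇ G) (z : E) :
    Tendsto (fun c => homothetyMean μ T V c z) (𝓝 0) (𝓝 (V z)) := by
  have h_path (y : E) : Continuous fun c : ℝ => AffineMap.homothety z c y := by
    simp only [AffineMap.homothety_apply, vsub_eq_sub, vadd_eq_add]
    fun_prop
  rw [← average_const (μ.restrict T) (V z)]
  refine tendsto_integral_filter_of_dominated_convergence (fun _ => ‖V‖)
    (.of_forall fun c => (integrable_comp_homothety V z c).to_average.aestronglyMeasurable)
    (.of_forall fun c => .of_forall fun y => V.norm_coe_le_norm _) (integrable_const _)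
    (.of_forall fun y => ?_)
  simpa only [Function.comp_def, AffineMap.homothety_zero, AffineMap.const_apply] using
    (V.continuous.comp (h_path y)).tendsto 0

/-- The constant in the comparison of the means over two consecutive homothetic copies, for a body
of dimension `D` and shape measure `σ`. -/
noncomputable def chainingConst (D : ℕ) (s p σ : ℝ) : ℝ :=
  σ ^ 2 * 2 ^ D * (3 / 2) ^ (D + s * p)

theorem chainingConst_nonneg (D : ℕ) (s p σ : ℝ) : 0 ≤ chainingConst D s p σ := by
  unfold chainingConst
  positivity

/-- The constant in the trace–Poincaré inequality on a body of dimension `D` and shape measure `σ`,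
for a measure with constant of upper Ahlfors regularity `A`; the last factor sums the geometric
series of ratio `2 ^ (-β)`, where `β` is the exponent of the diameter. -/
noncomputable def tracePoincareConst (D : ℕ) (s p β σ A : ℝ) : ℝ :=
  (chainingConst D s p σ * A) ^ (1 / p) * (1 - (1 / 2) ^ β)⁻¹

theorem one_sub_half_rpow_pos {β : ℝ} (hβ : 0 < β) : 0 < 1 - (1 / 2 : ℝ) ^ β :=
  sub_pos.2 (Real.rpow_lt_one (by norm_num) (by norm_num) hβ)

theorem tracePoincareConst_pos (D : ℕ) (s p : ℝ) {β σ A : ℝ} (hβ : 0 < β) (hσ : 0 < σ)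
    (hA : 0 < A) : 0 < tracePoincareConst D s p β σ A := by
  have := one_sub_half_rpow_pos hβ
  unfold tracePoincareConst chainingConst
  positivity

theorem tracePoincareConst_mono (D : ℕ) (s : ℝ) {p β σ σ' A : ℝ} (hp : 0 ≤ p) (hβ : 0 < β)
    (hA : 0 ≤ A) (hσ : 0 ≤ σ) (hσσ' : σ ≤ σ') :
    tracePoincareConst D s p β σ A ≤ tracePoincareConst D s p β σ' A := by
  have := one_sub_half_rpow_pos hβ
  unfold tracePoincareConst chainingConst
  gcongr

section Estimates

variable [FiniteDimensional ℝ E] [Nontrivial E] [BorelSpace E] [μ.IsAddHaarMeasure]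
  (hT : Convex ℝ T) (hTb : Bornology.IsBounded T) (hμT : μ T ≠ 0)
include hT hTb hμT

variable [CompleteSpace G] (hp : 1 ≤ p) (hs : 0 ≤ s) (V : E →ᵇ G)
include hp hs

theorem enorm_homothetyMean_half_sub_rpow_le (hz : z ∈ T) (hc : 0 < c) (hc₁ : c ≤ 1) :
    ‖homothetyMean μ T V (c / 2) z - homothetyMean μ T V c z‖ₑ ^ p ≤
      ENNReal.ofReal (chainingConst (finrank ℝ E) s p (shapeMeasure μ T) *
        (c * diam T) ^ (s * p - finrank ℝ E)) *
      ∫⁻ x in closedBall z (c * diam T),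
        ∫⁻ y in T, gagliardoKernel s p V x y ∂μ ∂(μ.restrict T) := by
  have : IsFiniteMeasure (μ.restrict T) := isFiniteMeasure_restrict.2 hTb.measure_lt_top.ne
  have : NeZero (μ.restrict T) := ⟨by simpa using hμT⟩
  have h_shape : 0 ≤ shapeMeasure μ T := shapeMeasure_nonneg μ
  set D := finrank ℝ E
  set r := c * diam T
  have hr : 0 < r := mul_pos hc (diam_pos_of_addHaar_ne_zero μ hTb hμT)
  have h_const : shapeMeasure μ T / r ^ D *
      (shapeMeasure μ T / (c / 2 * diam T) ^ D * (r + c / 2 * diam T) ^ (D + s * p)) =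
      chainingConst D s p (shapeMeasure μ T) * r ^ (s * p - D) := by
    rw [chainingConst, show c / 2 * diam T = r / 2 by ring, show r + r / 2 = 3 / 2 * r by ring,
      Real.mul_rpow (by norm_num) hr.le, Real.rpow_add hr, Real.rpow_sub hr, Real.rpow_natCast,
      div_pow]
    field_simp
  rw [← neg_sub, enorm_neg]
  calc ‖homothetyMean μ T V c z - homothetyMean μ T V (c / 2) z‖ₑ ^ p
      ≤ ⨍⁻ y in T, ⨍⁻ y' in T, ‖V (AffineMap.homothety z c y) -
          V (AffineMap.homothety z (c / 2) y')‖ₑ ^ p ∂μ ∂μ :=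
        enorm_average_sub_average_rpow_le (integrable_comp_homothety V z c)
          (integrable_comp_homothety V z (c / 2)) hp
    _ ≤ ENNReal.ofReal (shapeMeasure μ T / r ^ D) * ∫⁻ x in closedBall z r,
          (⨍⁻ y' in T, ‖V x - V (AffineMap.homothety z (c / 2) y')‖ₑ ^ p ∂μ) ∂(μ.restrict T) :=
        setLAverage_comp_homothety_le μ hT hTb hμT hz hc hc₁ fun x =>
          ⨍⁻ y' in T, ‖V x - V (AffineMap.homothety z (c / 2) y')‖ₑ ^ p ∂μ
    _ ≤ ENNReal.ofReal (shapeMeasure μ T / r ^ D) * ∫⁻ x in closedBall z r,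
          ENNReal.ofReal (shapeMeasure μ T / (c / 2 * diam T) ^ D *
            (r + c / 2 * diam T) ^ (D + s * p)) *
            ∫⁻ y in T, gagliardoKernel s p V x y ∂μ ∂(μ.restrict T) :=
        mul_le_mul_right (setLIntegral_mono' measurableSet_closedBall fun x hx =>
          setLAverage_enorm_sub_homothety_rpow_le hT hTb hμT (by linarith) hs hz (by linarith)
            (by linarith) (mem_closedBall.1 hx) V) _
    _ = _ := by
        rw [lintegral_const_mul' _ _ ENNReal.ofReal_ne_top, ← mul_assoc,
          ← ENNReal.ofReal_mul (by positivity), h_const]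

variable {κ : Measure E} {t A : ℝ}
  (hκT : ∀ᵐ z ∂κ, z ∈ T) (hκ : IsUpperAhlforsRegular κ t A) (hA : 0 ≤ A)
include hκT hκ hA

theorem IsUpperAhlforsRegular.eLpNorm_homothetyMean_half_sub_le (hc : 0 < c) (hc₁ : c ≤ 1) :
    eLpNorm (homothetyMean μ T V (c / 2) - homothetyMean μ T V c) (ENNReal.ofReal p) κ ≤
      ENNReal.ofReal ((chainingConst (finrank ℝ E) s p (shapeMeasure μ T) * A) ^ (1 / p) *
        (c * diam T) ^ (s - (finrank ℝ E - t) / p)) * gagliardoEnergy μ s p T V ^ (1 / p) := by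
  have hp₀ : 0 < p := by linarith
  have := hκ.isLocallyFiniteMeasure
  set K := chainingConst (finrank ℝ E) s p (shapeMeasure μ T)
  have hK : 0 ≤ K := chainingConst_nonneg _ _ _ _
  set r := c * diam T
  have hr : 0 < r := mul_pos hc (diam_pos_of_addHaar_ne_zero μ hTb hμT)
  have h_kernel : Measurable fun x => ∫⁻ y in T, gagliardoKernel s p V x y ∂μ := by
    borelize G
    exact (measurable_gagliardoKernel V.continuous.stronglyMeasurable).lintegral_prod_right'
  have h_const : (K * r ^ (s * p - finrank ℝ E) * (A * r ^ t)) ^ (1 / p) =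
      (K * A) ^ (1 / p) * r ^ (s - (finrank ℝ E - t) / p) := by
    rw [mul_mul_mul_comm, ← Real.rpow_add hr, Real.mul_rpow (by positivity) (by positivity),
      ← Real.rpow_mul hr.le]
    congr 2
    field_simp
    ring
  rw [eLpNorm_eq_lintegral_rpow_enorm_toReal (by simpa using hp₀) ENNReal.ofReal_ne_top,
    ENNReal.toReal_ofReal hp₀.le, ← h_const, ← ENNReal.ofReal_rpow_of_nonneg (by positivity)
    (by positivity), ← ENNReal.mul_rpow_of_nonneg _ _ (by positivity)]
  gcongr
  calc ∫⁻ z, ‖(homothetyMean μ T V (c / 2) - homothetyMean μ T V c) z‖ₑ ^ p ∂κ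
      ≤ ∫⁻ z, ENNReal.ofReal (K * r ^ (s * p - finrank ℝ E)) * ∫⁻ x in closedBall z r,
          ∫⁻ y in T, gagliardoKernel s p V x y ∂μ ∂(μ.restrict T) ∂κ :=
        lintegral_mono_ae <| hκT.mono fun z hz =>
          enorm_homothetyMean_half_sub_rpow_le hT hTb hμT hp hs V hz hc hc₁
    _ = ENNReal.ofReal (K * r ^ (s * p - finrank ℝ E)) * ∫⁻ z, ∫⁻ x in closedBall z r,
          ∫⁻ y in T, gagliardoKernel s p V x y ∂μ ∂(μ.restrict T) ∂κ :=
        lintegral_const_mul' _ _ ENNReal.ofReal_ne_top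
    _ ≤ ENNReal.ofReal (K * r ^ (s * p - finrank ℝ E)) *
          (ENNReal.ofReal (A * r ^ t) * gagliardoEnergy μ s p T V) := by
        gcongr
        exact lintegral_setLIntegral_closedBall_le (fun x => hκ x r hr) h_kernel
    _ = ENNReal.ofReal (K * r ^ (s * p - finrank ℝ E) * (A * r ^ t)) *
          gagliardoEnergy μ s p T V := by
        rw [← mul_assoc, ← ENNReal.ofReal_mul (by positivity)]

theorem IsUpperAhlforsRegular.eLpNorm_sub_average_le (hst : (finrank ℝ E - t) / p < s) :
    eLpNorm (fun z => V z - ⨍ y in T, V y ∂μ) (ENNReal.ofReal p) κ ≤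
      ENNReal.ofReal
        (tracePoincareConst (finrank ℝ E) s p (s - (finrank ℝ E - t) / p) (shapeMeasure μ T) A *
          diam T ^ (s - (finrank ℝ E - t) / p)) * gagliardoEnergy μ s p T V ^ (1 / p) := by
  have : IsFiniteMeasure (μ.restrict T) := isFiniteMeasure_restrict.2 hTb.measure_lt_top.ne
  have : NeZero (μ.restrict T) := ⟨by simpa using hμT⟩
  unfold tracePoincareConst
  set M := (chainingConst (finrank ℝ E) s p (shapeMeasure μ T) * A) ^ (1 / p)
  have hM : 0 ≤ M := Real.rpow_nonneg (mul_nonneg (chainingConst_nonneg _ _ _ _) hA) _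
  set β := s - (finrank ℝ E - t) / p
  have hθ : 0 < 1 - (1 / 2 : ℝ) ^ β := one_sub_half_rpow_pos (sub_pos.2 hst)
  have h_step (n : ℕ) : eLpNorm (homothetyMean μ T V ((1 / 2) ^ (n + 1)) -
      homothetyMean μ T V ((1 / 2) ^ n)) (ENNReal.ofReal p) κ ≤
      (ENNReal.ofReal (M * diam T ^ β) * gagliardoEnergy μ s p T V ^ (1 / p)) *
        ENNReal.ofReal ((1 / 2) ^ β) ^ n := by
    have h_scale : M * ((1 / 2) ^ n * diam T) ^ β = M * diam T ^ β * ((1 / 2) ^ β) ^ n := by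
      rw [Real.mul_rpow (by positivity) diam_nonneg, ← Real.rpow_natCast_mul (by norm_num),
        mul_comm (n : ℝ), Real.rpow_mul_natCast (by norm_num)]
      ring
    rw [mul_right_comm, ← ENNReal.ofReal_pow (by positivity), ← ENNReal.ofReal_mul (by positivity),
      ← h_scale, pow_succ, mul_one_div]
    exact IsUpperAhlforsRegular.eLpNorm_homothetyMean_half_sub_le hT hTb hμT hp hs V hκT hκ hA
      (by positivity) (pow_le_one₀ (by norm_num) (by norm_num))
  have h_lim (z : E) : Tendsto (fun n : ℕ => homothetyMean μ T V ((1 / 2) ^ n) z) atTop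
      (𝓝 (V z)) :=
    (tendsto_homothetyMean_zero V z).comp
      (tendsto_pow_atTop_nhds_zero_of_lt_one (by norm_num) (by norm_num))
  have h_sum := eLpNorm_sub_le_of_geometric (ENNReal.one_le_ofReal.2 hp)
    (fun n => (stronglyMeasurable_homothetyMean V.continuous _).aestronglyMeasurable) h_step
    (.of_forall h_lim)
  rw [pow_zero, ← ENNReal.ofReal_one, ← ENNReal.ofReal_sub _ (by positivity),
    ← ENNReal.ofReal_inv_of_pos hθ, mul_right_comm, ← ENNReal.ofReal_mul (by positivity),
    mul_right_comm] at h_sum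
  simpa only [Pi.sub_def, homothetyMean_one] using h_sum

end Estimates

section ContinuousOn

variable [FiniteDimensional ℝ E] [Nontrivial E] [BorelSpace E] [μ.IsAddHaarMeasure]
  {κ : Measure E} {t A : ℝ}

theorem IsUpperAhlforsRegular.eLpNorm_sub_average_le_of_continuousOn
    (hT : Convex ℝ T) (hTc : IsCompact T) (hT_int : (interior T).Nonempty) (hp : 1 ≤ p)
    (hs : 0 ≤ s) (hκT : ∀ᵐ z ∂κ, z ∈ T) (hκ : IsUpperAhlforsRegular κ t A) (hA : 0 ≤ A)
    (hst : (finrank ℝ E - t) / p < s) {σ : ℝ} (hσ : shapeMeasure μ T ≤ σ) {v : E → ℝ}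
    (hv : ContinuousOn v T) :
    eLpNorm (fun z => v z - ⨍ y in T, v y ∂μ) (ENNReal.ofReal p) κ ≤
      ENNReal.ofReal
        (tracePoincareConst (finrank ℝ E) s p (s - (finrank ℝ E - t) / p) σ A *
          diam T ^ (s - (finrank ℝ E - t) / p)) * gagliardoEnergy μ s p T v ^ (1 / p) := by
  obtain ⟨V, hVv⟩ := exists_boundedContinuousFunction_eqOn hTc hv
  have h_trace := hκ.eLpNorm_sub_average_le hT hTc.isBounded
    (μ := μ) (Measure.measure_pos_of_nonempty_interior μ hT_int).ne' hp hs V hκT hA hst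
  have h_congr : ∀ᵐ z ∂κ, V z - ⨍ y in T, V y ∂μ = v z - ⨍ y in T, v y ∂μ :=
    hκT.mono fun z hz => by
      rw [hVv hz, setAverage_congr_fun hTc.measurableSet (.of_forall hVv)]
  rw [eLpNorm_congr_ae h_congr, gagliardoEnergy_congr hTc.measurableSet hVv] at h_trace
  refine h_trace.trans ?_
  gcongr
  exact tracePoincareConst_mono _ _ (by linarith) (sub_pos.2 hst) hA (shapeMeasure_nonneg μ) hσ

end ContinuousOn

end Means

section Euclidean

/-- The `k`-dimensional Hausdorff measure of a ball of radius `2` in Euclidean `k`-space, the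
constant of upper Ahlfors regularity of subsets of `k`-dimensional affine subspaces. -/
noncomputable def flatRegularityConst (k : ℕ) : ℝ :=
  (μH[(k : ℝ)]).real (closedBall (0 : EuclideanSpace ℝ (Fin k)) 2)

theorem isAddHaarMeasure_hausdorffMeasure_euclideanSpace (k : ℕ) :
    (μH[(k : ℝ)] : Measure (EuclideanSpace ℝ (Fin k))).IsAddHaarMeasure := by
  simpa using isAddHaarMeasure_hausdorffMeasure (E := EuclideanSpace ℝ (Fin k))

theorem flatRegularityConst_pos (k : ℕ) : 0 < flatRegularityConst k := by
  have := isAddHaarMeasure_hausdorffMeasure_euclideanSpace k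
  exact ENNReal.toReal_pos (measure_closedBall_pos _ _ two_pos).ne' measure_closedBall_lt_top.ne

theorem hausdorffMeasure_closedBall_two_mul (k : ℕ) {r : ℝ} (hr : 0 ≤ r) :
    μH[(k : ℝ)] (closedBall (0 : EuclideanSpace ℝ (Fin k)) (2 * r)) =
      ENNReal.ofReal (flatRegularityConst k * r ^ k) := by
  have := isAddHaarMeasure_hausdorffMeasure_euclideanSpace k
  rw [mul_comm 2 r, Measure.addHaar_closedBall_mul _ _ hr zero_le_two, finrank_euclideanSpace_fin,
    flatRegularityConst, mul_comm, ENNReal.ofReal_mul measureReal_nonneg,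
    ofReal_measureReal measure_closedBall_lt_top.ne, mul_comm]

variable {E : Type*} [NormedAddCommGroup E] [InnerProductSpace ℝ E] [MeasurableSpace E]
  [BorelSpace E]

theorem isUpperAhlforsRegular_hausdorffMeasure_restrict (H : AffineSubspace ℝ E)
    [FiniteDimensional ℝ H.direction] {F : Set E} (hF : F ⊆ H) :
    IsUpperAhlforsRegular ((μH[(finrank ℝ H.direction : ℝ)]).restrict F) (finrank ℝ H.direction)
      (flatRegularityConst (finrank ℝ H.direction)) := by
  intro x r hr
  set k := finrank ℝ H.direction
  rw [Measure.restrict_apply measurableSet_closedBall, Real.rpow_natCast]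
  rcases (closedBall x r ∩ F).eq_empty_or_nonempty with h_empty | ⟨w, hwx, hwF⟩
  · simp only [h_empty, measure_empty, zero_le]
  let b := stdOrthonormalBasis ℝ H.direction
  let φ : EuclideanSpace ℝ (Fin k) → E := fun u => w + b.repr.symm u
  have hφ : Isometry φ := (isometry_add_left w).comp
    (H.direction.subtypeₗᵢ.isometry.comp b.repr.symm.isometry)
  have h_sub : closedBall x r ∩ F ⊆ φ '' closedBall 0 (2 * r) := by
    rintro y ⟨hyx, hyF⟩
    refine ⟨b.repr ⟨y - w, H.vsub_mem_direction (hF hyF) (hF hwF)⟩, ?_, ?_⟩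
    · rw [mem_closedBall_zero_iff, LinearIsometryEquiv.norm_map, Submodule.coe_norm,
        ← dist_eq_norm]
      linarith [dist_triangle_right y w x, mem_closedBall.1 hyx, mem_closedBall.1 hwx]
    · simp only [φ, LinearIsometryEquiv.symm_apply_apply, add_sub_cancel]
  calc μH[k] (closedBall x r ∩ F)
      ≤ μH[k] (φ '' closedBall 0 (2 * r)) := measure_mono h_sub
    _ = μH[k] (closedBall (0 : EuclideanSpace ℝ (Fin k)) (2 * r)) :=
        hφ.hausdorffMeasure_image (Or.inl k.cast_nonneg) _
    _ = _ := hausdorffMeasure_closedBall_two_mul k hr.le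

theorem gagliardoSeminorm_nonneg (d : ℕ) (s p : ℝ) (T : Set (EuclideanSpace ℝ (Fin d)))
    (v : EuclideanSpace ℝ (Fin d) → ℝ) : 0 ≤ gagliardoSeminorm d s p T v :=
  Real.rpow_nonneg (integral_nonneg fun x => integral_nonneg fun y => by positivity) _

theorem ofReal_gagliardoSeminorm {d : ℕ} {s p : ℝ} (hp : 0 < p) (hs : 0 ≤ s)
    {T : Set (EuclideanSpace ℝ (Fin d))} {v : EuclideanSpace ℝ (Fin d) → ℝ}
    (hv : IntegrableOn (fun q : EuclideanSpace ℝ (Fin d) × EuclideanSpace ℝ (Fin d) =>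
      |v q.1 - v q.2| ^ p / ‖q.1 - q.2‖ ^ ((d : ℝ) + s * p)) (T ×ˢ T)) :
    ENNReal.ofReal (gagliardoSeminorm d s p T v) = gagliardoEnergy volume s p T v ^ (1 / p) := by
  have h_nonneg (x y : EuclideanSpace ℝ (Fin d)) :
      0 ≤ |v x - v y| ^ p / ‖x - y‖ ^ ((d : ℝ) + s * p) := by positivity
  rw [IntegrableOn, Measure.volume_eq_prod, ← Measure.prod_restrict] at hv
  rw [gagliardoSeminorm, ← ENNReal.ofReal_rpow_of_nonneg
    (integral_nonneg fun x => integral_nonneg (h_nonneg x)) (by positivity),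
    ← integral_prod _ hv, ofReal_integral_eq_lintegral_ofReal hv (.of_forall fun _ => h_nonneg _ _),
    lintegral_prod _ hv.aemeasurable.ennreal_ofReal]
  simp only [gagliardoEnergy, gagliardoKernel_eq_ofReal hp hs, Real.norm_eq_abs,
    finrank_euclideanSpace_fin]

end Euclidean

section Simplex

variable {E ι : Type*} [NormedAddCommGroup E] [NormedSpace ℝ E] [Fintype ι] {x : ι → E}

theorem interior_convexHull_range_nonempty [FiniteDimensional ℝ E] (hx : AffineIndependent ℝ x)
    (h_card : Fintype.card ι = finrank ℝ E + 1) :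
    (interior (convexHull ℝ (range x))).Nonempty := by
  rwa [interior_convexHull_nonempty_iff_affineSpan_eq_top,
    hx.affineSpan_eq_top_iff_card_eq_finrank_add_one]

theorem finrank_direction_affineSpan_image_compl_singleton (hx : AffineIndependent ℝ x) {n : ℕ}
    (h_card : Fintype.card ι = n + 2) (i : ι) :
    finrank ℝ (affineSpan ℝ (x '' {i}ᶜ)).direction = n := by
  classical
  have h_facet : ({i}ᶜ : Finset ι).card = n + 1 := by
    rw [Finset.card_compl, Finset.card_singleton, h_card]; omega
  have h_rank := hx.finrank_vectorSpan_image_finset h_facet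
  rwa [Finset.coe_image, Finset.coe_compl, Finset.coe_singleton, ← direction_affineSpan] at h_rank

end Simplex

end

theorem simplex_trace_poincare_inequality_general
    (d : ℕ) (hd : 0 < d) (m : ℕ) (p s μ₀ : ℝ) (hp : 1 ≤ p) (hs : m / p < s) (hμ₀ : 0 < μ₀) :
    ∃ C > 0, ∀ (T F : Set (EuclideanSpace ℝ (Fin d)))
      (H : AffineSubspace ℝ (EuclideanSpace ℝ (Fin d))),
      IsCompact T → Convex ℝ T → (interior T).Nonempty →
      Metric.diam T ^ d / (volume T).toReal ≤ μ₀ →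
      F ⊆ T → F ⊆ H → Module.finrank ℝ H.direction + m = d →
      ∀ v : EuclideanSpace ℝ (Fin d) → ℝ, ContinuousOn v T → (∫ y in T, v y) = 0 →
        IntegrableOn
          (fun q : EuclideanSpace ℝ (Fin d) × EuclideanSpace ℝ (Fin d) =>
            |v q.1 - v q.2| ^ p / ‖q.1 - q.2‖ ^ ((d : ℝ) + s * p)) (T ×ˢ T) →
        (∫ z in F, |v z| ^ p ∂(μH[((d : ℝ) - m)])) ^ (1 / p) ≤
          C * Metric.diam T ^ (s - m / p) * gagliardoSeminorm d s p T v := by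
  have hp₀ : 0 < p := by linarith
  have hs₀ : 0 ≤ s := (by positivity : (0 : ℝ) ≤ m / p).trans hs.le
  have hβ : 0 < s - m / p := sub_pos.2 hs
  have hA : 0 < flatRegularityConst (d - m) := flatRegularityConst_pos _
  have hC := tracePoincareConst_pos d s p hβ hμ₀ hA
  refine ⟨_, hC, fun T F H hTc hT hT_int h_shape hFT hFH hH v hv h_mean h_energy => ?_⟩
  have : Nonempty (Fin d) := ⟨0, hd⟩
  have h_seminorm := gagliardoSeminorm_nonneg d s p T v
  replace h_shape : shapeMeasure volume T ≤ μ₀ := by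
    rwa [shapeMeasure, finrank_euclideanSpace_fin]
  have hκ := isUpperAhlforsRegular_hausdorffMeasure_restrict H hFH
  have hκT : ∀ᵐ z ∂(μH[((d : ℝ) - m)]).restrict F, z ∈ T :=
    ae_restrict_of_ae_restrict_of_subset hFT (ae_restrict_mem hTc.measurableSet)
  rw [show Module.finrank ℝ H.direction = d - m by omega, Nat.cast_sub (by omega)] at hκ
  have h_trace := hκ.eLpNorm_sub_average_le_of_continuousOn (μ := volume) hT hTc hT_int hp hs₀ hκT
    hA.le (by simpa using hs) h_shape hv
  rw [setAverage_eq, h_mean, smul_zero] at h_trace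
  simp only [sub_zero, finrank_euclideanSpace_fin, sub_sub_cancel] at h_trace
  rw [← ofReal_gagliardoSeminorm hp₀ hs₀ h_energy, ← ENNReal.ofReal_mul (by positivity)] at h_trace
  refine (ENNReal.ofReal_le_ofReal_iff (by positivity)).1 (le_trans ?_ h_trace)
  simpa only [Real.norm_eq_abs] using ofReal_integral_norm_rpow_le_eLpNorm (f := v) hp₀

/-- **Fractional trace–Poincaré inequality on a simplex.**
For `d ≥ 2`, `p ∈ [1,∞)`, `s ∈ (1/p, 1)` and `μ₀ > 0` there is `C > 0`, depending
only on `d, p, s, μ₀`, such that for every `d`-simplex `T = conv{x₀,…,x_d} ⊆ ℝ^d`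
with shape measure `h_T^d / vol(T) ≤ μ₀`, every facet `F` of `T` (the convex hull
of all vertices but one), and every continuous function `v : T → ℝ` with zero mean
over `T` and finite Gagliardo seminorm, one has
`( ∫_F |v|^p dH^{d−1} )^{1/p} ≤ C · h_T^{s − 1/p} · |v|_{W^{s,p}(T)}`,
with `H^{d-1}` the `(d−1)`-dimensional Hausdorff measure. -/
theorem simplex_trace_poincare_inequality
    (d : ℕ) (hd : 2 ≤ d)
    (p s μ₀ : ℝ) (hp : 1 ≤ p) (hs : 1 / p < s) (hs1 : s < 1) (hμ₀ : 0 < μ₀) :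
    ∃ C > 0,
      ∀ x : Fin (d + 1) → EuclideanSpace ℝ (Fin d),
        AffineIndependent ℝ x →
        Metric.diam (convexHull ℝ (Set.range x)) ^ d /
            (volume (convexHull ℝ (Set.range x))).toReal ≤ μ₀ →
        ∀ i : Fin (d + 1),
          ∀ v : EuclideanSpace ℝ (Fin d) → ℝ,
            ContinuousOn v (convexHull ℝ (Set.range x)) →
            (∫ y in convexHull ℝ (Set.range x), v y) = 0 →
            IntegrableOn
              (fun q : EuclideanSpace ℝ (Fin d) × EuclideanSpace ℝ (Fin d) =>
                |v q.1 - v q.2| ^ p / ‖q.1 - q.2‖ ^ ((d : ℝ) + s * p))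
              ((convexHull ℝ (Set.range x)) ×ˢ (convexHull ℝ (Set.range x))) →
            (∫ z in convexHull ℝ (x '' ({i}ᶜ)), |v z| ^ p ∂(μH[((d : ℝ) - 1)])) ^ (1 / p) ≤
              C * Metric.diam (convexHull ℝ (Set.range x)) ^ (s - 1 / p) *
                gagliardoSeminorm d s p (convexHull ℝ (Set.range x)) v := by
  obtain ⟨C, hC, h_trace⟩ := simplex_trace_poincare_inequality_general d (by omega) 1 p s μ₀ hp
    (by simpa using hs) hμ₀
  simp only [Nat.cast_one] at h_trace
  refine ⟨C, hC, fun x hx h_shape i v hv h_mean h_energy => ?_⟩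
  have h_dim : Module.finrank ℝ (affineSpan ℝ (x '' {i}ᶜ)).direction = d - 1 :=
    finrank_direction_affineSpan_image_compl_singleton hx
      (by rw [Fintype.card_fin]; omega) i
  exact h_trace _ _ (affineSpan ℝ (x '' {i}ᶜ)) ((Set.finite_range x).isCompact_convexHull ℝ)
    (convex_convexHull ℝ _) (interior_convexHull_range_nonempty hx (by simp)) h_shape
    (convexHull_mono (Set.image_subset_range _ _)) (convexHull_subset_affineSpan _)
    (by omega) v hv h_mean h_energy
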